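/- Under Assumptions 1.1, 1.2 and 1.3, there exists a random variable Ĉ₇ with 1 ≤ Ĉ₇ < ∞ everywhere such that, almost surely on Λ, for every real ε > 0: limsup_{n→∞} γ_n^{p̂} u(θ_n) ≤ Ĉ₇ (φ_ε(ξ))^{μ̂}. -/

import Mathlib

open MeasureTheory Filter

open scoped NNReal Topology

/-!
Time is measured on the clock `γ`. Over a window of length between `t / 2` and `t`, with `t` small
compared with the inverse of the Lipschitz constant of `∇ f`, gradient descent decreases `f` by
`(t / 8) ‖∇ f‖ ^ 2`, up to a multiple of the squared sum of the noise; undoing the weights `γ ^ r`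
by Abel summation bounds that sum by `B γ ^ (-r)` for every `B > ξ`. With the Łojasiewicz
inequality, `u = f(θ) - f̂` satisfies a discrete form of `u' ≤ -c u ^ (2 / μ) + D B ^ 2 γ ^ (-2 r)`.

Small constants are barriers for this inequality, and `u` is arbitrarily small infinitely often, so
`u` has nonpositive upper limit. From then on `u` stays below a barrier `K (γ - σ) ^ (-p)`. Either
the forcing limits the exponent, giving `p = μ r` and `K` proportional to `B ^ μ`, or the decay of
the unforced equation does, giving `p = μ / (2 - μ)`.
-/

/-! ### Real and vector inequalities -/

lemma norm_sum_Ico_smul_le_of_antitoneOn {E : Type*} [SeminormedAddCommGroup E]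
    [NormedSpace ℝ E] {x : ℕ → E} {w : ℕ → ℝ} {B : ℝ} {n m : ℕ} (hnm : n ≤ m)
    (hw : AntitoneOn w (Set.Icc n m)) (hwm : 0 ≤ w m)
    (hB : ∀ k ∈ Set.Icc n m, ‖∑ i ∈ Finset.Ico n k, x i‖ ≤ B) :
    ‖∑ i ∈ Finset.Ico n m, w i • x i‖ ≤ w n * B := by
  have abel_le : ∀ k, n ≤ k → k ≤ m →
      ‖∑ i ∈ Finset.Ico n k, w i • x i - w k • ∑ i ∈ Finset.Ico n k, x i‖ ≤ (w n - w k) * B := by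
    intro k hnk
    induction k, hnk using Nat.le_induction with
    | base => simp
    | succ k hnk ih =>
      intro hkm
      have hdrop : 0 ≤ w k - w (k + 1) :=
        sub_nonneg.2 (hw ⟨hnk, by lia⟩ ⟨by lia, hkm⟩ k.le_succ)
      calc ‖∑ i ∈ Finset.Ico n (k + 1), w i • x i - w (k + 1) • ∑ i ∈ Finset.Ico n (k + 1), x i‖
          = ‖(∑ i ∈ Finset.Ico n k, w i • x i - w k • ∑ i ∈ Finset.Ico n k, x i)
              + (w k - w (k + 1)) • ∑ i ∈ Finset.Ico n (k + 1), x i‖ := by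
            rw [Finset.sum_Ico_succ_top hnk, Finset.sum_Ico_succ_top hnk]
            congr 1
            module
        _ ≤ (w n - w k) * B + (w k - w (k + 1)) * B := by
            refine norm_add_le_of_le (ih (by lia)) ?_
            rw [norm_smul, Real.norm_of_nonneg hdrop]
            gcongr
            exact hB _ ⟨by lia, hkm⟩
        _ = (w n - w (k + 1)) * B := by ring
  calc ‖∑ i ∈ Finset.Ico n m, w i • x i‖
      = ‖(∑ i ∈ Finset.Ico n m, w i • x i - w m • ∑ i ∈ Finset.Ico n m, x i)
          + w m • ∑ i ∈ Finset.Ico n m, x i‖ := by rw [sub_add_cancel]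
    _ ≤ (w n - w m) * B + w m * B := by
        refine norm_add_le_of_le (abel_le m hnm le_rfl) ?_
        rw [norm_smul, Real.norm_of_nonneg hwm]
        gcongr
        exact hB m ⟨hnm, le_rfl⟩
    _ = w n * B := by ring

lemma le_add_inner_gradient_add_norm_sq {E : Type*} [NormedAddCommGroup E]
    [InnerProductSpace ℝ E] [CompleteSpace E] {f : E → ℝ} {S : Set E} {L : ℝ≥0}
    (hS : Convex ℝ S) (hf : ∀ x ∈ S, DifferentiableAt ℝ f x)
    (hL : LipschitzOnWith L (gradient f) S) {x y : E} (hx : x ∈ S) (hy : y ∈ S) :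
    f y ≤ f x + inner ℝ (gradient f x) (y - x) + L * ‖y - x‖ ^ 2 := by
  have hseg : segment ℝ x y ⊆ S := hS.segment_subset hx hy
  have hfderiv : ∀ z ∈ segment ℝ x y, ‖fderiv ℝ f z - fderiv ℝ f x‖ ≤ L * ‖y - x‖ := by
    intro z hz
    rw [← toDual_gradient, ← toDual_gradient, ← map_sub, LinearIsometryEquiv.norm_map]
    refine (hL.norm_sub_le (hseg hz) hx).trans ?_
    gcongr
    exact norm_sub_le_of_mem_segment hz
  have hTaylor := (convex_segment x y).norm_image_sub_le_of_norm_fderiv_le'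
    (fun z hz => hf z (hseg hz)) hfderiv (left_mem_segment ℝ x y) (right_mem_segment ℝ x y)
  rw [← toDual_gradient, InnerProductSpace.toDual_apply_apply, Real.norm_eq_abs] at hTaylor
  linarith [(abs_le.1 hTaylor).2]

lemma monotoneOn_sub_mul_rpow {c β : ℝ} (hβ : 1 ≤ β) (hcβ : c * β ≤ 1) :
    MonotoneOn (fun x : ℝ => x - c * x ^ β) (Set.Icc 0 1) := by
  have hderiv : ∀ x : ℝ, HasDerivAt (fun x : ℝ => x - c * x ^ β) (1 - c * (β * x ^ (β - 1))) x :=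
    fun x => (hasDerivAt_id x).sub ((Real.hasDerivAt_rpow_const (Or.inr hβ)).const_mul c)
  refine monotoneOn_of_deriv_nonneg (convex_Icc 0 1)
    (fun x _ => (hderiv x).continuousAt.continuousWithinAt)
    (fun x _ => (hderiv x).differentiableAt.differentiableWithinAt) fun x hx => ?_
  rw [interior_Icc] at hx
  have hpow : x ^ (β - 1) ≤ 1 := Real.rpow_le_one hx.1.le hx.2.le (by linarith)
  rw [(hderiv x).deriv, sub_nonneg, ← mul_assoc]
  exact mul_le_one₀ hcβ (Real.rpow_nonneg hx.1.le _) hpow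

lemma rpow_neg_mul_one_sub_le_rpow_neg_add {x t p : ℝ} (hx : 0 < x) (ht : 0 ≤ t) (hp : 0 ≤ p) :
    x ^ (-p) * (1 - p * (t / x)) ≤ (x + t) ^ (-p) := by
  have hratio : 0 < 1 + t / x := by positivity
  have hlog : Real.log (1 + t / x) ≤ t / x := by
    linarith [Real.log_le_sub_one_of_pos hratio]
  calc x ^ (-p) * (1 - p * (t / x))
      ≤ x ^ (-p) * Real.exp (Real.log (1 + t / x) * -p) := by
        gcongr
        linarith [Real.add_one_le_exp (Real.log (1 + t / x) * -p),
          mul_le_mul_of_nonneg_left hlog hp]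
    _ = (x * (1 + t / x)) ^ (-p) := by
        rw [← Real.rpow_def_of_pos hratio, Real.mul_rpow hx.le hratio.le]
    _ = (x + t) ^ (-p) := by rw [mul_add, mul_one, mul_div_cancel₀ t hx.ne']

lemma tendsto_rpow_mul_sub_rpow_neg (p σ : ℝ) :
    Tendsto (fun x : ℝ => x ^ p * (x - σ) ^ (-p)) atTop (𝓝 1) := by
  have hratio : Tendsto (fun x : ℝ => x / (x - σ)) atTop (𝓝 1) := by
    have hshift : Tendsto (fun x : ℝ => 1 + σ / (x - σ)) atTop (𝓝 (1 + 0)) :=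
      ((tendsto_atTop_add_const_right _ (-σ) tendsto_id).const_div_atTop σ).const_add 1
    rw [add_zero] at hshift
    refine hshift.congr' ?_
    filter_upwards [eventually_gt_atTop σ] with x hx
    have : x - σ ≠ 0 := (sub_pos.2 hx).ne'
    field_simp
    ring
  have hpow := hratio.rpow_const (p := p) (Or.inl one_ne_zero)
  rw [Real.one_rpow] at hpow
  refine hpow.congr' ?_
  filter_upwards [eventually_gt_atTop σ, eventually_ge_atTop 0] with x hσ hx
  rw [Real.div_rpow hx (sub_pos.2 hσ).le, Real.rpow_neg (sub_pos.2 hσ).le, div_eq_mul_inv]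

lemma rpow_two_div_le_of_le_mul_rpow {u M G μ : ℝ} (hu : 0 ≤ u) (hM : 0 ≤ M) (hG : 0 ≤ G)
    (hμ : 0 < μ) (h : u ≤ M * G ^ μ) : u ^ (2 / μ) ≤ M ^ (2 / μ) * G ^ 2 := by
  calc u ^ (2 / μ) ≤ (M * G ^ μ) ^ (2 / μ) := by gcongr
    _ = M ^ (2 / μ) * G ^ 2 := by
        rw [Real.mul_rpow hM (by positivity), ← Real.rpow_mul hG, mul_div_cancel₀ 2 hμ.ne',
          Real.rpow_two]

/-! ### Recursive inequalities over windows of a clock -/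

/-- The differential inequality `u' ≤ -c (u⁺) ^ β + e` in integrated form: it is required, as long
as `u ≤ δ`, across every window whose length on the clock `γ` lies between `t / 2` and `t`. The
constants `c` and `e` absorb the length of the window. -/
def WindowDecay (γ u e : ℕ → ℝ) (t c β δ : ℝ) : Prop :=
  ∀ᶠ n in atTop, u n ≤ δ → ∀ m, n ≤ m → γ m - γ n ∈ Set.Icc (t / 2) t →
    u m ≤ max (u n) 0 - c * max (u n) 0 ^ β + e n

/-- The upward oscillation of `u` across windows of length at most `t` on the clock `γ` vanishes
asymptotically. -/
def WindowUpperStable (γ u : ℕ → ℝ) (t : ℝ) : Prop :=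
  ∀ ε > 0, ∀ᶠ n in atTop, ∀ m, n ≤ m → γ m - γ n ≤ t → u m ≤ u n + ε

lemma exists_window_start {γ : ℕ → ℝ} {t : ℝ} {N m : ℕ} (ht : 0 < t) (hNm : N ≤ m)
    (hinc : ∀ i ≥ N, γ (i + 1) - γ i ≤ t / 2) (hgap : t < γ m - γ N) :
    ∃ n ≥ N, n < m ∧ γ m - γ n ∈ Set.Icc (t / 2) t := by
  classical
  have hex : ∃ n, N ≤ n ∧ γ m - γ n ≤ t := ⟨m, hNm, by simpa using ht.le⟩
  obtain ⟨hNn, hle⟩ := Nat.find_spec hex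
  have hnm : Nat.find hex ≤ m := Nat.find_min' hex ⟨hNm, by simpa using ht.le⟩
  have hne : Nat.find hex ≠ N := fun h => by rw [h] at hle; linarith
  obtain ⟨j, hj⟩ : ∃ j, Nat.find hex = j + 1 := Nat.exists_eq_succ_of_ne_zero (by lia)
  have hlt : t < γ m - γ j := by
    have hmin := Nat.find_min hex (m := j) (by lia)
    by_contra! h
    exact hmin ⟨by lia, h⟩
  have hge : t / 2 ≤ γ m - γ (Nat.find hex) := by
    rw [hj]
    linarith [hinc j (by lia)]
  refine ⟨_, hNn, hnm.lt_of_ne fun h => ?_, hge, hle⟩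
  rw [h] at hge
  linarith

lemma forall_ge_of_window_steps {γ : ℕ → ℝ} {t : ℝ} {N : ℕ} {p : ℕ → Prop} (ht : 0 < t)
    (hinc : ∀ i ≥ N, γ (i + 1) - γ i ≤ t / 2) (base : ∀ m ≥ N, γ m - γ N ≤ t → p m)
    (step : ∀ n ≥ N, ∀ m ≥ n, γ m - γ n ∈ Set.Icc (t / 2) t → p n → p m) : ∀ m ≥ N, p m := by
  intro m
  induction m using Nat.strong_induction_on with
  | _ m ih =>
    intro hNm
    rcases le_or_gt (γ m - γ N) t with hgap | hgap
    · exact base m hNm hgap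
    · obtain ⟨n, hNn, hnm, hwin⟩ := exists_window_start ht hNm hinc hgap
      exact step n hNn m hnm.le hwin (ih n hnm hNn)

theorem WindowDecay.eventually_le {γ u e : ℕ → ℝ} {t c β δ : ℝ} (h : WindowDecay γ u e t c β δ)
    (hstab : WindowUpperStable γ u t) (ht : 0 < t) (hc : 0 < c) (hβ : 1 ≤ β) (hcβ : c * β ≤ 1)
    (hδ : 0 < δ) (hinc : Tendsto (fun n => γ (n + 1) - γ n) atTop (𝓝 0))
    (he : Tendsto e atTop (𝓝 0)) (hfreq : ∀ ε > 0, ∃ᶠ n in atTop, u n ≤ ε) :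
    ∀ ε > 0, ∀ᶠ n in atTop, u n ≤ ε := by
  intro ε hε
  set η := min ε (min δ 1)
  have hη0 : 0 < η := by positivity
  have hηδ : η ≤ δ := (min_le_right _ _).trans (min_le_left _ _)
  have hη1 : η ≤ 1 := (min_le_right _ _).trans (min_le_right _ _)
  have hsmall : ∀ᶠ n in atTop, e n ≤ c * η ^ β := he.eventually_le_const (by positivity)
  obtain ⟨N, huN, hN, hstabN⟩ := ((hfreq (η / 2) (by positivity)).and_eventually
    ((eventually_forall_ge_atTop.2
      ((h.and hsmall).and (hinc.eventually_le_const (half_pos ht)))).and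
      (hstab (η / 2) (by positivity)))).exists
  have hbarrier : ∀ m ≥ N, u m ≤ η := by
    refine forall_ge_of_window_steps ht (fun i hi => (hN i hi).2)
      (fun m hm hgap => by linarith [hstabN m hm hgap]) fun n hn m hm hwin hun => ?_
    have hmono := monotoneOn_sub_mul_rpow hβ hcβ
      ⟨le_max_right (u n) 0, max_le (hun.trans hη1) zero_le_one⟩ ⟨hη0.le, hη1⟩
      (max_le hun hη0.le)
    linarith [(hN n hn).1.1 (hun.trans hηδ) m hm hwin, (hN n hn).1.2]
  filter_upwards [eventually_ge_atTop N] with m hm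
  exact (hbarrier m hm).trans (min_le_left _ _)

/-- `K T ^ (-p)` is a supersolution of the recursion in `WindowDecay`: one half of the decay term
pays for the forcing, the other half for the decrease of the barrier. -/
lemma barrier_sub_rpow_add_le {K c β p s t D T : ℝ} (hK : 0 < K) (hc : 0 ≤ c) (hp : 0 ≤ p)
    (ht : 0 ≤ t) (hT : 1 ≤ T) (hps : p * β ≤ s) (hforce : 2 * D ≤ c * K ^ β)
    (hdecay : t * p ≤ c / 2 * K ^ (β - 1) * T ^ (1 - p * (β - 1))) :
    K * T ^ (-p) - c * (K * T ^ (-p)) ^ β + D * T ^ (-s) ≤ K * (T + t) ^ (-p) := by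
  have hT0 : 0 < T := by linarith
  have hpow : (K * T ^ (-p)) ^ β = K ^ β * T ^ (-(p * β)) := by
    rw [Real.mul_rpow hK.le (by positivity), ← Real.rpow_mul hT0.le, neg_mul]
  have force_le : D * T ^ (-s) ≤ c / 2 * (K * T ^ (-p)) ^ β :=
    calc D * T ^ (-s) ≤ (c / 2 * K ^ β) * T ^ (-(p * β)) := by
          gcongr
          linarith
      _ = c / 2 * (K * T ^ (-p)) ^ β := by rw [hpow]; ring
  have hT_split : T ^ (1 - p * (β - 1)) * (T ^ (-p) / T) = T ^ (-(p * β)) := by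
    rw [← Real.rpow_sub_one hT0.ne', ← Real.rpow_add hT0]
    congr 1
    ring
  have drop_le : K * T ^ (-p) * (p * (t / T)) ≤ c / 2 * (K * T ^ (-p)) ^ β :=
    calc K * T ^ (-p) * (p * (t / T)) = t * p * (K * (T ^ (-p) / T)) := by ring
      _ ≤ c / 2 * K ^ (β - 1) * T ^ (1 - p * (β - 1)) * (K * (T ^ (-p) / T)) := by gcongr
      _ = c / 2 * (K ^ (β - 1) * K) * (T ^ (1 - p * (β - 1)) * (T ^ (-p) / T)) := by ring
      _ = c / 2 * (K * T ^ (-p)) ^ β := by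
          rw [hT_split, Real.rpow_sub_one hK.ne', div_mul_cancel₀ _ hK.ne', hpow, mul_assoc]
  have hshift := mul_le_mul_of_nonneg_left
    (rpow_neg_mul_one_sub_le_rpow_neg_add hT0 ht hp) hK.le
  linarith

/-- The time shift `σ` makes the barrier dominate `u` on the first window. -/
theorem WindowDecay.exists_eventually_le_mul_rpow_neg {γ u : ℕ → ℝ} {t c β δ p s D K : ℝ}
    (h : WindowDecay γ u (fun n => D * γ n ^ (-s)) t c β δ) (ht : 0 < t) (hc : 0 ≤ c)
    (hβ : 1 ≤ β) (hcβ : c * β ≤ 1) (hδ : 0 < δ) (hmono : Monotone γ)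
    (hγ : Tendsto γ atTop atTop) (hinc : Tendsto (fun n => γ (n + 1) - γ n) atTop (𝓝 0))
    (hu : ∀ ε > 0, ∀ᶠ n in atTop, u n ≤ ε) (hp : 0 < p) (hps : p * β ≤ s) (hD : 0 ≤ D)
    (hK : 0 < K) (hforce : 2 * D ≤ c * K ^ β)
    (hdecay : ∀ᶠ T in atTop, t * p ≤ c / 2 * K ^ (β - 1) * T ^ (1 - p * (β - 1))) :
    ∃ σ, ∀ᶠ n in atTop, u n ≤ K * (γ n - σ) ^ (-p) := by
  have hbarrier_small : ∀ᶠ T : ℝ in atTop, K * T ^ (-p) ≤ 1 :=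
    ((tendsto_rpow_neg_atTop hp).const_mul K).eventually_le_const (by simp)
  obtain ⟨T₀, hT₀⟩ := eventually_atTop.1
    ((hdecay.and hbarrier_small).and (eventually_ge_atTop (1 : ℝ)))
  have hT₀1 : 1 ≤ T₀ := (hT₀ T₀ le_rfl).2
  have hη : 0 < K * (T₀ + t) ^ (-p) := by positivity
  obtain ⟨N, hN⟩ := eventually_atTop.1 ((h.and (hinc.eventually_le_const (half_pos ht))).and
    (((hu _ hη).and (hu δ hδ)).and (hγ.eventually_ge_atTop T₀)))
  set σ := γ N - T₀
  have hclock : ∀ n ≥ N, T₀ ≤ γ n - σ := fun n hn => by linarith [hmono hn]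
  refine ⟨σ, eventually_atTop.2 ⟨N, forall_ge_of_window_steps ht (fun i hi => (hN i hi).1.2)
    (fun m hm hgap => ?_) fun n hn m hm hwin hun => ?_⟩⟩
  · refine (hN m hm).2.1.1.trans (mul_le_mul_of_nonneg_left ?_ hK.le)
    exact Real.rpow_le_rpow_of_nonpos (by linarith [hclock m hm]) (by linarith) (by linarith)
  · set T := γ n - σ
    have hTn : T₀ ≤ T := hclock n hn
    obtain ⟨⟨hTdecay, hTsmall⟩, hT1⟩ := hT₀ T hTn
    have hstep := (hN n hn).1.1 (hN n hn).2.1.2 m hm hwin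
    have hV0 : 0 ≤ K * T ^ (-p) := by positivity
    have hreplace := monotoneOn_sub_mul_rpow hβ hcβ
      ⟨le_max_right (u n) 0, max_le (hun.trans hTsmall) zero_le_one⟩ ⟨hV0, hTsmall⟩
      (max_le hun hV0)
    have hforce_shift : D * γ n ^ (-s) ≤ D * T ^ (-s) := by
      refine mul_le_mul_of_nonneg_left (Real.rpow_le_rpow_of_nonpos (by linarith) ?_ ?_) hD
      · linarith [(hN N le_rfl).2.2]
      · linarith [mul_pos hp (zero_lt_one.trans_le hβ)]
    have hsuper := barrier_sub_rpow_add_le hK hc hp.le ht.le hT1 hps hforce hTdecay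
    have hend : K * (T + t) ^ (-p) ≤ K * (γ m - σ) ^ (-p) := by
      refine mul_le_mul_of_nonneg_left (Real.rpow_le_rpow_of_nonpos ?_ ?_ (by linarith)) hK.le
      · linarith [hclock m (le_trans hn hm)]
      · linarith [hwin.2]
    linarith

theorem WindowDecay.eventually_rpow_mul_le {γ u : ℕ → ℝ} {t c β δ p s D K C : ℝ}
    (h : WindowDecay γ u (fun n => D * γ n ^ (-s)) t c β δ) (ht : 0 < t) (hc : 0 ≤ c)
    (hβ : 1 ≤ β) (hcβ : c * β ≤ 1) (hδ : 0 < δ) (hmono : Monotone γ)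
    (hγ : Tendsto γ atTop atTop) (hinc : Tendsto (fun n => γ (n + 1) - γ n) atTop (𝓝 0))
    (hu : ∀ ε > 0, ∀ᶠ n in atTop, u n ≤ ε) (hp : 0 < p) (hps : p * β ≤ s) (hD : 0 ≤ D)
    (hK : 0 < K) (hforce : 2 * D ≤ c * K ^ β)
    (hdecay : ∀ᶠ T in atTop, t * p ≤ c / 2 * K ^ (β - 1) * T ^ (1 - p * (β - 1)))
    (hKC : K < C) : ∀ᶠ n in atTop, γ n ^ p * u n ≤ C := by
  obtain ⟨σ, hbarrier⟩ := h.exists_eventually_le_mul_rpow_neg ht hc hβ hcβ hδ hmono hγ hinc hu hp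
    hps hD hK hforce hdecay
  have hlim : ∀ᶠ n in atTop, K * (γ n ^ p * (γ n - σ) ^ (-p)) ≤ C :=
    (((tendsto_rpow_mul_sub_rpow_neg p σ).comp hγ).const_mul K).eventually_le_const (by simpa)
  filter_upwards [hbarrier, hlim, hγ.eventually_ge_atTop 0] with n hbn hn hγn
  calc γ n ^ p * u n ≤ γ n ^ p * (K * (γ n - σ) ^ (-p)) := by gcongr
    _ = K * (γ n ^ p * (γ n - σ) ^ (-p)) := by ring
    _ ≤ C := hn

/-! ### Gradient descent along a window -/

/-- A trajectory `θ` of gradient descent for `f` which stays in a convex region `S` where `∇ f` is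
`L`-Lipschitz. Time is measured on the clock `γ`, whose increments are the step sizes; `ζ n` is the
noise of step `n`, already multiplied by the step size. -/
structure IsNoisyDescent {E : Type*} [NormedAddCommGroup E] [InnerProductSpace ℝ E]
    [CompleteSpace E] (f : E → ℝ) (S : Set E) (L : ℝ≥0) (γ : ℕ → ℝ) (θ ζ : ℕ → E) : Prop where
  convex : Convex ℝ S
  differentiableAt : ∀ x ∈ S, DifferentiableAt ℝ f x
  lipschitzOnWith : LipschitzOnWith L (gradient f) S
  monotone : Monotone γ
  mem : ∀ n, θ n ∈ S
  step : ∀ n, θ (n + 1) = θ n - (γ (n + 1) - γ n) • gradient f (θ n) - ζ n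

namespace IsNoisyDescent

variable {E : Type*} [NormedAddCommGroup E] [InnerProductSpace ℝ E] [CompleteSpace E]
  {f : E → ℝ} {S : Set E} {L : ℝ≥0} {γ : ℕ → ℝ} {θ ζ : ℕ → E} {n m k : ℕ} {η t : ℝ}

lemma sub_add_smul_gradient_eq (h : IsNoisyDescent f S L γ θ ζ) (hnk : n ≤ k) :
    θ k - θ n + (γ k - γ n) • gradient f (θ n) =
      -(∑ i ∈ Finset.Ico n k, (γ (i + 1) - γ i) • (gradient f (θ i) - gradient f (θ n)))
        - ∑ i ∈ Finset.Ico n k, ζ i := by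
  induction k, hnk using Nat.le_induction with
  | base => simp
  | succ k hnk ih =>
    rw [Finset.sum_Ico_succ_top hnk, Finset.sum_Ico_succ_top hnk, neg_add, sub_add_eq_sub_sub,
      add_sub_right_comm, ← ih, h.step]
    module

lemma norm_sub_add_smul_gradient_le (h : IsNoisyDescent f S L γ θ ζ) {D : ℝ} (hnk : n ≤ k)
    (hD : ∀ i ∈ Set.Ico n k, ‖θ i - θ n‖ ≤ D) (hζ : ‖∑ i ∈ Finset.Ico n k, ζ i‖ ≤ η) :
    ‖θ k - θ n + (γ k - γ n) • gradient f (θ n)‖ ≤ L * (γ k - γ n) * D + η := by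
  rw [h.sub_add_smul_gradient_eq hnk]
  refine (norm_sub_le _ _).trans (add_le_add ?_ hζ)
  rw [norm_neg]
  calc ‖∑ i ∈ Finset.Ico n k, (γ (i + 1) - γ i) • (gradient f (θ i) - gradient f (θ n))‖
      ≤ ∑ i ∈ Finset.Ico n k, (γ (i + 1) - γ i) * (L * D) := by
        refine norm_sum_le_of_le _ fun i hi => ?_
        have hinc : 0 ≤ γ (i + 1) - γ i := sub_nonneg.2 (h.monotone i.le_succ)
        rw [norm_smul, Real.norm_of_nonneg hinc]
        gcongr
        refine (h.lipschitzOnWith.norm_sub_le (h.mem i) (h.mem n)).trans ?_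
        gcongr
        exact hD i (Finset.mem_Ico.1 hi)
    _ = L * (γ k - γ n) * D := by rw [← Finset.sum_mul, Finset.sum_Ico_sub γ hnk]; ring

lemma norm_sub_le (h : IsNoisyDescent f S L γ θ ζ) (hL : L * (γ m - γ n) ≤ 1 / 2)
    (hζ : ∀ k ∈ Set.Icc n m, ‖∑ i ∈ Finset.Ico n k, ζ i‖ ≤ η) (hnk : n ≤ k) (hkm : k ≤ m) :
    ‖θ k - θ n‖ ≤ 2 * ((γ m - γ n) * ‖gradient f (θ n)‖ + η) := by
  set D := 2 * ((γ m - γ n) * ‖gradient f (θ n)‖ + η)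
  have hs : 0 ≤ γ m - γ n := sub_nonneg.2 (h.monotone (hnk.trans hkm))
  have hη : 0 ≤ η := (norm_nonneg _).trans (hζ k ⟨hnk, hkm⟩)
  have : 0 ≤ D := by positivity
  induction k using Nat.strong_induction_on with
  | _ k ih =>
    have hsk : 0 ≤ γ k - γ n := sub_nonneg.2 (h.monotone hnk)
    have hsm : γ k - γ n ≤ γ m - γ n := sub_le_sub_right (h.monotone hkm) _
    have hdrift := h.norm_sub_add_smul_gradient_le hnk
      (fun i hi => ih i hi.2 hi.1 (hi.2.le.trans hkm)) (hζ k ⟨hnk, hkm⟩)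
    calc ‖θ k - θ n‖
        = ‖(θ k - θ n + (γ k - γ n) • gradient f (θ n)) - (γ k - γ n) • gradient f (θ n)‖ := by
          rw [add_sub_cancel_right]
      _ ≤ (L * (γ k - γ n) * D + η) + (γ k - γ n) * ‖gradient f (θ n)‖ := by
          refine (_root_.norm_sub_le _ _).trans (add_le_add hdrift ?_)
          rw [norm_smul, Real.norm_of_nonneg hsk]
      _ ≤ (L * (γ m - γ n) * D + η) + (γ m - γ n) * ‖gradient f (θ n)‖ := by gcongr
      _ ≤ (1 / 2 * D + η) + (γ m - γ n) * ‖gradient f (θ n)‖ := by gcongr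
      _ = D := by ring

theorem apply_le (h : IsNoisyDescent f S L γ θ ζ) (hL : L * (γ m - γ n) ≤ 1 / 20) (hnm : n ≤ m)
    (hζ : ∀ k ∈ Set.Icc n m, ‖∑ i ∈ Finset.Ico n k, ζ i‖ ≤ η) :
    f (θ m) ≤ f (θ n) - (γ m - γ n) / 2 * ‖gradient f (θ n)‖ ^ 2
      + 2 * η * ‖gradient f (θ n)‖ + 8 * L * η ^ 2 := by
  set s := γ m - γ n
  set g := gradient f (θ n)
  set D := 2 * (s * ‖g‖ + η)
  have hs : 0 ≤ s := sub_nonneg.2 (h.monotone hnm)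
  have hη : 0 ≤ η := (norm_nonneg _).trans (hζ m ⟨hnm, le_rfl⟩)
  have hdist : ∀ k ∈ Set.Icc n m, ‖θ k - θ n‖ ≤ D := fun k hk =>
    h.norm_sub_le (by linarith) hζ hk.1 hk.2
  have hdrift : ‖θ m - θ n + s • g‖ ≤ L * s * D + η := h.norm_sub_add_smul_gradient_le hnm
    (fun i hi => hdist i ⟨hi.1, hi.2.le⟩) (hζ m ⟨hnm, le_rfl⟩)
  have hinner : inner ℝ g (θ m - θ n) ≤ -s * ‖g‖ ^ 2 + ‖g‖ * (L * s * D + η) :=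
    calc inner ℝ g (θ m - θ n) = -s * ‖g‖ ^ 2 + inner ℝ g (θ m - θ n + s • g) := by
          rw [inner_add_right, inner_smul_right, real_inner_self_eq_norm_sq]
          ring
      _ ≤ -s * ‖g‖ ^ 2 + ‖g‖ * (L * s * D + η) := by
          gcongr
          exact (real_inner_le_norm _ _).trans (by gcongr)
  have hsq : L * ‖θ m - θ n‖ ^ 2 ≤ L * D ^ 2 := by
    gcongr
    exact hdist m ⟨hnm, le_rfl⟩
  have hDsq : D ^ 2 ≤ 8 * (s * ‖g‖) ^ 2 + 8 * η ^ 2 := by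
    linarith [sq_nonneg (s * ‖g‖ - η)]
  have hTaylor := le_add_inner_gradient_add_norm_sq h.convex h.differentiableAt
    h.lipschitzOnWith (h.mem n) (h.mem m)
  calc f (θ m)
      ≤ f (θ n) + (-s * ‖g‖ ^ 2 + ‖g‖ * (L * s * D + η))
          + L * (8 * (s * ‖g‖) ^ 2 + 8 * η ^ 2) := by
        linarith [mul_le_mul_of_nonneg_left hDsq L.coe_nonneg]
    _ = f (θ n) - s * ‖g‖ ^ 2 + 10 * ((L * s) * (s * ‖g‖ ^ 2))
          + (2 * ((L * s) * (η * ‖g‖)) + η * ‖g‖) + 8 * L * η ^ 2 := by ring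
    _ ≤ f (θ n) - s * ‖g‖ ^ 2 + 10 * (1 / 20 * (s * ‖g‖ ^ 2))
          + (2 * (1 / 20 * (η * ‖g‖)) + η * ‖g‖) + 8 * L * η ^ 2 := by gcongr
    _ ≤ f (θ n) - s / 2 * ‖g‖ ^ 2 + 2 * η * ‖g‖ + 8 * L * η ^ 2 := by
        linarith [mul_nonneg hη (norm_nonneg g)]

theorem apply_le_sub_gradient_sq (h : IsNoisyDescent f S L γ θ ζ) (ht : 0 < t)
    (hL : L * t ≤ 1 / 20) (hnm : n ≤ m) (hwin : γ m - γ n ∈ Set.Icc (t / 2) t)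
    (hζ : ∀ k ∈ Set.Icc n m, ‖∑ i ∈ Finset.Ico n k, ζ i‖ ≤ η) :
    f (θ m) ≤ f (θ n) - t / 8 * ‖gradient f (θ n)‖ ^ 2 + (8 / t + 8 * L) * η ^ 2 := by
  set G := ‖gradient f (θ n)‖
  have hwindow := h.apply_le (hL.trans' (by gcongr; exact hwin.2)) hnm hζ
  have hlength : t / 4 * G ^ 2 ≤ (γ m - γ n) / 2 * G ^ 2 :=
    mul_le_mul_of_nonneg_right (by linarith [hwin.1]) (sq_nonneg G)
  have amgm : 0 ≤ t / 8 * (G - 8 / t * η) ^ 2 := by positivity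
  have amgm_expand : t / 8 * (G - 8 / t * η) ^ 2 = t / 8 * G ^ 2 - 2 * η * G + 8 / t * η ^ 2 := by
    field_simp
    ring
  linarith

end IsNoisyDescent

/-! ### Weighted noise -/

/-- Over windows of length at most one on the clock `γ`, the sums of the noise `ζ` weighted by
`γ ^ r` are eventually bounded by `B`. -/
def WeightedNoiseLE {E : Type*} [SeminormedAddCommGroup E] [NormedSpace ℝ E] (γ : ℕ → ℝ)
    (ζ : ℕ → E) (r B : ℝ) : Prop :=
  ∀ᶠ n in atTop, ∀ m, n ≤ m → γ m - γ n ≤ 1 → ‖∑ i ∈ Finset.Ico n m, γ i ^ r • ζ i‖ ≤ B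

lemma WeightedNoiseLE.eventually_norm_sum_le {E : Type*} [SeminormedAddCommGroup E]
    [NormedSpace ℝ E] {γ : ℕ → ℝ} {ζ : ℕ → E} {r B : ℝ} (h : WeightedNoiseLE γ ζ r B)
    (hmono : Monotone γ) (hγ : Tendsto γ atTop atTop) (hr : 0 ≤ r) :
    ∀ᶠ n in atTop, ∀ m, n ≤ m → γ m - γ n ≤ 1 →
      ‖∑ i ∈ Finset.Ico n m, ζ i‖ ≤ B * γ n ^ (-r) := by
  filter_upwards [h, hγ.eventually_gt_atTop 0] with n hn hγn m hnm hgap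
  have hpos : ∀ i, n ≤ i → 0 < γ i := fun i hi => hγn.trans_le (hmono hi)
  have hAbel := norm_sum_Ico_smul_le_of_antitoneOn (x := fun i => γ i ^ r • ζ i)
    (w := fun i => γ i ^ (-r)) hnm
    (fun i hi j _ hij => Real.rpow_le_rpow_of_nonpos (hpos i hi.1) (hmono hij) (by linarith))
    (Real.rpow_nonneg (hpos m hnm).le _)
    fun k hk => hn k hk.1 (by linarith [hmono hk.2])
  have hcancel : ∀ i ∈ Finset.Ico n m, γ i ^ (-r) • γ i ^ r • ζ i = ζ i := fun i hi => by
    have hi0 : 0 < γ i := hpos i (Finset.mem_Ico.1 hi).1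
    rw [smul_smul, ← Real.rpow_add hi0, neg_add_cancel, Real.rpow_zero, one_smul]
  rw [Finset.sum_congr rfl hcancel] at hAbel
  exact hAbel.trans_eq (mul_comm _ _)

/-- The last index at which the clock `γ`, started at `n`, shows at most `t`; this is `a(n, t)` in
the paper. -/
noncomputable def windowEnd (γ : ℕ → ℝ) (n : ℕ) (t : ℝ) : ℕ :=
  sSup {k | n ≤ k ∧ γ k - γ n ≤ t}

lemma le_windowEnd {γ : ℕ → ℝ} {n k : ℕ} {t : ℝ} (hγ : Tendsto γ atTop atTop) (hnk : n ≤ k)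
    (hgap : γ k - γ n ≤ t) : k ≤ windowEnd γ n t := by
  obtain ⟨N, hN⟩ := eventually_atTop.1 (hγ.eventually_gt_atTop (γ n + t))
  refine le_csSup ⟨N, fun j hj => ?_⟩ ⟨hnk, hgap⟩
  by_contra! hNj
  linarith [hN j hNj.le, hj.2]

/-- The largest norm of a partial sum of `x` started at `n`, over the window of unit length on the
clock `γ`. -/
noncomputable def windowNoise {E : Type*} [SeminormedAddCommGroup E] (γ : ℕ → ℝ) (x : ℕ → E)
    (n : ℕ) : ℝ :=
  ⨆ k ∈ Set.Ico n (windowEnd γ n 1), ‖∑ i ∈ Finset.Icc n k, x i‖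

section windowNoise

variable {E : Type*} [SeminormedAddCommGroup E] {γ : ℕ → ℝ} {x : ℕ → E}

lemma windowNoise_nonneg (γ : ℕ → ℝ) (x : ℕ → E) (n : ℕ) : 0 ≤ windowNoise γ x n :=
  Real.iSup_nonneg fun _ => Real.iSup_nonneg fun _ => norm_nonneg _

lemma norm_sum_Icc_le_windowNoise {n k : ℕ} (hk : k ∈ Set.Ico n (windowEnd γ n 1)) :
    ‖∑ i ∈ Finset.Icc n k, x i‖ ≤ windowNoise γ x n := by
  have hbdd : BddAbove (Set.range fun k => ⨆ (_ : k ∈ Set.Ico n (windowEnd γ n 1)),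
      ‖∑ i ∈ Finset.Icc n k, x i‖) := by
    refine ⟨∑ k ∈ Finset.Ico n (windowEnd γ n 1), ‖∑ i ∈ Finset.Icc n k, x i‖, ?_⟩
    rintro _ ⟨j, rfl⟩
    refine Real.iSup_le (fun hj => ?_) (Finset.sum_nonneg fun _ _ => norm_nonneg _)
    exact Finset.single_le_sum (f := fun k => ‖∑ i ∈ Finset.Icc n k, x i‖)
      (fun _ _ => norm_nonneg _) (Finset.mem_Ico.2 hj)
  refine le_trans (le_of_eq ?_) (le_ciSup hbdd k)
  rw [ciSup_pos hk]

lemma norm_sum_Ico_le_windowNoise {n m : ℕ} (hγ : Tendsto γ atTop atTop) (hnm : n ≤ m)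
    (hgap : γ m - γ n ≤ 1) : ‖∑ i ∈ Finset.Ico n m, x i‖ ≤ windowNoise γ x n := by
  have hend : m ≤ windowEnd γ n 1 := le_windowEnd hγ hnm hgap
  rcases m with _ | k
  · simpa using windowNoise_nonneg γ x n
  · rcases hnm.eq_or_lt with rfl | hlt
    · simpa using windowNoise_nonneg γ x _
    · rw [Finset.Ico_add_one_right_eq_Icc]
      exact norm_sum_Icc_le_windowNoise ⟨by lia, by lia⟩

lemma limsup_windowNoise_nonneg (hbdd : IsBoundedUnder (· ≤ ·) atTop (windowNoise γ x)) :
    0 ≤ limsup (windowNoise γ x) atTop :=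
  le_limsup_of_frequently_le (Frequently.of_forall fun _ => windowNoise_nonneg γ x _) hbdd

lemma weightedNoiseLE_of_limsup_lt [NormedSpace ℝ E] {ζ : ℕ → E} {r B : ℝ}
    (hγ : Tendsto γ atTop atTop)
    (hbdd : IsBoundedUnder (· ≤ ·) atTop (windowNoise γ fun i => γ i ^ r • ζ i))
    (hB : limsup (windowNoise γ fun i => γ i ^ r • ζ i) atTop < B) : WeightedNoiseLE γ ζ r B := by
  filter_upwards [eventually_lt_of_limsup_lt hB hbdd] with n hn m hnm hgap
  exact (norm_sum_Ico_le_windowNoise hγ hnm hgap).trans hn.le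

end windowNoise

/-! ### From the descent estimate to recursive inequalities -/

namespace IsNoisyDescent

variable {E : Type*} [NormedAddCommGroup E] [InnerProductSpace ℝ E] [CompleteSpace E]
  {f : E → ℝ} {S Q : Set E} {L : ℝ≥0} {γ : ℕ → ℝ} {θ ζ : ℕ → E} {r B t a : ℝ}

theorem windowUpperStable (h : IsNoisyDescent f S L γ θ ζ) (hS : IsCompact S)
    (hζ : WeightedNoiseLE γ ζ r B) (hγ : Tendsto γ atTop atTop) (hr : 0 < r) (ht : t ≤ 1)
    (hL : L * t ≤ 1 / 20) : WindowUpperStable γ (fun n => f (θ n) - a) t := by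
  intro ε hε
  obtain ⟨G, hG⟩ := hS.exists_bound_of_continuousOn h.lipschitzOnWith.continuousOn
  have hη : Tendsto (fun n => B * γ n ^ (-r)) atTop (𝓝 0) := by
    simpa using ((tendsto_rpow_neg_atTop hr).comp hγ).const_mul B
  have herror : Tendsto (fun n => 2 * (B * γ n ^ (-r)) * G + 8 * L * (B * γ n ^ (-r)) ^ 2)
      atTop (𝓝 0) := by
    simpa using ((hη.const_mul 2).mul_const G).add ((hη.pow 2).const_mul (8 * (L : ℝ)))
  filter_upwards [hζ.eventually_norm_sum_le h.monotone hγ hr.le, herror.eventually_le_const hε]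
    with n hn hnε m hnm hgap
  set η := B * γ n ^ (-r)
  have hη0 : 0 ≤ η := (norm_nonneg _).trans (hn n le_rfl (by simp))
  have hwindow := h.apply_le (hL.trans' (by gcongr)) hnm
    fun k hk => hn k hk.1 (by linarith [h.monotone hk.2])
  have hdecrease : 0 ≤ (γ m - γ n) / 2 * ‖gradient f (θ n)‖ ^ 2 :=
    mul_nonneg (by linarith [h.monotone hnm]) (sq_nonneg _)
  have hgrad : 2 * η * ‖gradient f (θ n)‖ ≤ 2 * η * G := by
    gcongr
    exact hG _ (h.mem n)
  linarith

theorem windowDecay (h : IsNoisyDescent f S L γ θ ζ) (hζ : WeightedNoiseLE γ ζ r B)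
    (hγ : Tendsto γ atTop atTop) (hr : 0 ≤ r) (ht : 0 < t) (ht1 : t ≤ 1) (hL : L * t ≤ 1 / 20)
    {c δ μ M : ℝ} (hc : 0 ≤ c) (hμ : 0 < μ) (hM : 0 ≤ M) (hcM : c * M ^ (2 / μ) ≤ t / 8)
    (hQ : ∀ᶠ n in atTop, θ n ∈ Q)
    (hLoj : ∀ x ∈ Q, |f x - a| ≤ δ → |f x - a| ≤ M * ‖gradient f x‖ ^ μ) :
    WindowDecay γ (fun n => f (θ n) - a)
      (fun n => (8 / t + 8 * L) * B ^ 2 * γ n ^ (-(2 * r))) t c (2 / μ) δ := by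
  filter_upwards [hζ.eventually_norm_sum_le h.monotone hγ hr, hQ, hγ.eventually_ge_atTop 0]
    with n hn hnQ hγn hδ m hnm hwin
  have hwindow := h.apply_le_sub_gradient_sq ht hL hnm hwin
    fun k hk => hn k hk.1 (by linarith [h.monotone hk.2, hwin.2])
  have hsq : (B * γ n ^ (-r)) ^ 2 = B ^ 2 * γ n ^ (-(2 * r)) := by
    rw [mul_pow, ← Real.rpow_mul_natCast hγn]
    congr 2
    push_cast
    ring
  have hdecay : f (θ n) - a - t / 8 * ‖gradient f (θ n)‖ ^ 2 ≤
      max (f (θ n) - a) 0 - c * max (f (θ n) - a) 0 ^ (2 / μ) := by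
    rcases le_or_gt (f (θ n) - a) 0 with hneg | hpos
    · rw [max_eq_right hneg, Real.zero_rpow (by positivity)]
      linarith [mul_nonneg ht.le (sq_nonneg ‖gradient f (θ n)‖)]
    · have hgrad := hLoj (θ n) hnQ (by rwa [abs_of_pos hpos])
      rw [abs_of_pos hpos] at hgrad
      rw [max_eq_left hpos.le]
      refine sub_le_sub_left ?_ _
      calc c * (f (θ n) - a) ^ (2 / μ)
          ≤ c * (M ^ (2 / μ) * ‖gradient f (θ n)‖ ^ 2) := by
            gcongr
            exact rpow_two_div_le_of_le_mul_rpow hpos.le hM (norm_nonneg _) hμ hgrad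
        _ ≤ t / 8 * ‖gradient f (θ n)‖ ^ 2 := by rw [← mul_assoc]; gcongr
  rw [hsq, ← mul_assoc] at hwindow
  linarith

end IsNoisyDescent

/-! ### Convergence rates -/

/-- The exponent `p̂ = μ min(r, r̂)` of the convergence rate, where `r̂ = 1 / (2 - μ)`, and `r̂ = ∞`
if `μ = 2`. -/
noncomputable def rateExponent (r μ : ℝ) : ℝ :=
  μ * (if μ < 2 then min r (1 / (2 - μ)) else r)

/-- The quantity `φ(Ξ)` of the paper, through which the noise level `Ξ` enters the rate: it depends
on the position of `r` with respect to `r̂ = 1 / (2 - μ)`. -/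
noncomputable def noiseFactor (r μ Ξ : ℝ) : ℝ :=
  if μ = 2 ∨ r < 1 / (2 - μ) then Ξ else if r = 1 / (2 - μ) then 1 + Ξ else 1

section Rate

variable {γ u : ℕ → ℝ} {t c δ D r μ Ξ : ℝ}

lemma lt_two_of_one_le_mul (hr : 0 < r) (h : 1 ≤ r * (2 - μ)) : μ < 2 :=
  sub_pos.1 (pos_of_mul_pos_right (zero_lt_one.trans_le h) hr.le)

lemma rateExponent_of_mul_lt_one (h : r * (2 - μ) < 1) : rateExponent r μ = μ * r := by
  unfold rateExponent
  split_ifs with hμ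
  · rw [min_eq_left ((le_div_iff₀ (sub_pos.2 hμ)).2 h.le)]
  · rfl

lemma rateExponent_of_one_le_mul (hr : 0 < r) (h : 1 ≤ r * (2 - μ)) :
    rateExponent r μ = μ / (2 - μ) := by
  have hμ : μ < 2 := lt_two_of_one_le_mul hr h
  rw [rateExponent, if_pos hμ, min_eq_right ((div_le_iff₀ (sub_pos.2 hμ)).2 h), mul_one_div]

lemma noiseFactor_of_mul_lt_one (hμ : μ ≤ 2) (h : r * (2 - μ) < 1) : noiseFactor r μ Ξ = Ξ :=
  if_pos (hμ.eq_or_lt.imp_right fun hlt => (lt_div_iff₀ (sub_pos.2 hlt)).2 h)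

lemma one_le_noiseFactor (hr : 0 < r) (h : 1 ≤ r * (2 - μ)) (hΞ : 0 ≤ Ξ) :
    1 ≤ noiseFactor r μ Ξ := by
  have hμ : μ < 2 := lt_two_of_one_le_mul hr h
  have hle : 1 / (2 - μ) ≤ r := (div_le_iff₀ (sub_pos.2 hμ)).2 h
  rw [noiseFactor, if_neg (not_or.2 ⟨hμ.ne, hle.not_gt⟩)]
  split_ifs <;> linarith

theorem exists_forall_eventually_rpow_mul_le_of_mul_lt_one
    (h : ∀ B, Ξ < B → WindowDecay γ u (fun n => D * B ^ 2 * γ n ^ (-(2 * r))) t c (2 / μ) δ)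
    (ht : 0 < t) (hc : 0 < c) (hcμ : c * (2 / μ) ≤ 1) (hδ : 0 < δ) (hD : 0 ≤ D)
    (hmono : Monotone γ) (hγ : Tendsto γ atTop atTop)
    (hinc : Tendsto (fun n => γ (n + 1) - γ n) atTop (𝓝 0))
    (hu : ∀ ε > 0, ∀ᶠ n in atTop, u n ≤ ε) (hr : 0 < r) (hμ : μ ∈ Set.Ioc 0 2) (hΞ : 0 ≤ Ξ)
    (hsub : r * (2 - μ) < 1) :
    ∃ C, 1 ≤ C ∧ ∀ B > Ξ, ∀ b > C * B ^ μ, ∀ᶠ n in atTop, γ n ^ (μ * r) * u n ≤ b := by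
  obtain ⟨hμ0, hμ2⟩ := hμ
  refine ⟨max 1 ((2 * D / c) ^ (μ / 2)), le_max_left _ _, fun B hB b hb => ?_⟩
  set C := max 1 ((2 * D / c) ^ (μ / 2))
  have hC : 0 < C := zero_lt_one.trans_le (le_max_left _ _)
  have hB0 : 0 < B := hΞ.trans_lt hB
  have hK : 0 < C * B ^ μ := by positivity
  have hCpow : 2 * D / c ≤ C ^ (2 / μ) :=
    calc 2 * D / c = ((2 * D / c) ^ (μ / 2)) ^ (2 / μ) := by
          rw [← Real.rpow_mul (by positivity), div_mul_div_cancel₀ two_ne_zero, div_self hμ0.ne',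
            Real.rpow_one]
      _ ≤ C ^ (2 / μ) := by gcongr; exact le_max_right _ _
  have hforce : 2 * (D * B ^ 2) ≤ c * (C * B ^ μ) ^ (2 / μ) :=
    calc 2 * (D * B ^ 2) = c * (2 * D / c * B ^ 2) := by field_simp
      _ ≤ c * (C ^ (2 / μ) * B ^ 2) := by gcongr
      _ = c * (C * B ^ μ) ^ (2 / μ) := by
          rw [Real.mul_rpow hC.le (by positivity), ← Real.rpow_mul hB0.le,
            mul_div_cancel₀ 2 hμ0.ne', Real.rpow_two]
  have hexp : 0 < 1 - μ * r * (2 / μ - 1) := by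
    have : μ * r * (2 / μ - 1) = r * (2 - μ) := by field_simp
    linarith
  refine (h B hB).eventually_rpow_mul_le ht hc.le ((one_le_div₀ hμ0).2 hμ2) hcμ hδ hmono hγ hinc
    hu (by positivity) (le_of_eq (by field_simp)) (by positivity) hK hforce ?_ hb
  exact ((tendsto_rpow_atTop hexp).const_mul_atTop (by positivity)).eventually_ge_atTop _

theorem exists_forall_eventually_rpow_mul_le_of_one_le_mul
    (h : ∀ B, Ξ < B → WindowDecay γ u (fun n => D * B ^ 2 * γ n ^ (-(2 * r))) t c (2 / μ) δ)
    (ht : 0 < t) (hc : 0 < c) (hcμ : c * (2 / μ) ≤ 1) (hδ : 0 < δ) (hD : 0 ≤ D)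
    (hmono : Monotone γ) (hγ : Tendsto γ atTop atTop)
    (hinc : Tendsto (fun n => γ (n + 1) - γ n) atTop (𝓝 0))
    (hu : ∀ ε > 0, ∀ᶠ n in atTop, u n ≤ ε) (hμ : μ ∈ Set.Ioo 0 2) (hsuper : 1 ≤ r * (2 - μ)) :
    ∃ C, 1 ≤ C ∧ ∀ b > C, ∀ᶠ n in atTop, γ n ^ (μ / (2 - μ)) * u n ≤ b := by
  obtain ⟨hμ0, hμ2⟩ := hμ
  have hμ2' : 0 < 2 - μ := sub_pos.2 hμ2
  have hβ : 0 < 2 / μ - 1 := sub_pos.2 ((one_lt_div hμ0).2 hμ2)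
  have hexp : 1 - μ / (2 - μ) * (2 / μ - 1) = 0 := by
    field_simp
    ring
  obtain ⟨K, hforce, hdecay, hK1⟩ : ∃ K : ℝ, 2 * (D * (Ξ + 1) ^ 2) ≤ c * K ^ (2 / μ) ∧
      t * (μ / (2 - μ)) ≤ c / 2 * K ^ (2 / μ - 1) ∧ 1 ≤ K :=
    ((((tendsto_rpow_atTop (by positivity)).const_mul_atTop hc).eventually_ge_atTop _).and
      ((((tendsto_rpow_atTop hβ).const_mul_atTop (half_pos hc)).eventually_ge_atTop _).and
        (eventually_ge_atTop 1))).exists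
  refine ⟨K, hK1, fun b hb => ?_⟩
  refine (h (Ξ + 1) (lt_add_one Ξ)).eventually_rpow_mul_le ht hc.le ((one_le_div₀ hμ0).2 hμ2.le)
    hcμ hδ hmono hγ hinc hu (by positivity) ?_ (by positivity) (by linarith) hforce ?_ hb
  · rw [div_mul_div_cancel₀' hμ0.ne', div_le_iff₀ hμ2']
    linarith
  · simp only [hexp, Real.rpow_zero, mul_one]
    exact .of_forall fun _ => hdecay

theorem exists_forall_eventually_rpow_rateExponent_mul_le
    (h : ∀ B, Ξ < B → WindowDecay γ u (fun n => D * B ^ 2 * γ n ^ (-(2 * r))) t c (2 / μ) δ)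
    (hstab : WindowUpperStable γ u t)
    (ht : 0 < t) (hc : 0 < c) (hcμ : c * (2 / μ) ≤ 1) (hδ : 0 < δ) (hD : 0 ≤ D)
    (hmono : Monotone γ) (hγ : Tendsto γ atTop atTop)
    (hinc : Tendsto (fun n => γ (n + 1) - γ n) atTop (𝓝 0))
    (hfreq : ∀ ε > 0, ∃ᶠ n in atTop, u n ≤ ε) (hr : 0 < r) (hμ : μ ∈ Set.Ioc 0 2) (hΞ : 0 ≤ Ξ) :
    ∃ C, 1 ≤ C ∧ ∀ ε > 0, ∀ b > C * (noiseFactor r μ Ξ + ε) ^ μ,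
      ∀ᶠ n in atTop, γ n ^ rateExponent r μ * u n ≤ b := by
  have hforcing : Tendsto (fun n => D * (Ξ + 1) ^ 2 * γ n ^ (-(2 * r))) atTop (𝓝 0) := by
    simpa using ((tendsto_rpow_neg_atTop (by positivity : 0 < 2 * r)).comp hγ).const_mul
      (D * (Ξ + 1) ^ 2)
  have hu : ∀ ε > 0, ∀ᶠ n in atTop, u n ≤ ε := (h (Ξ + 1) (lt_add_one Ξ)).eventually_le hstab ht
    hc ((one_le_div₀ hμ.1).2 hμ.2) hcμ hδ hinc hforcing hfreq
  rcases lt_or_ge (r * (2 - μ)) 1 with hsub | hsuper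
  · obtain ⟨C, hC, hrate⟩ := exists_forall_eventually_rpow_mul_le_of_mul_lt_one h ht hc hcμ hδ hD
      hmono hγ hinc hu hr hμ hΞ hsub
    refine ⟨C, hC, fun ε hε b hb => ?_⟩
    rw [noiseFactor_of_mul_lt_one hμ.2 hsub] at hb
    rw [rateExponent_of_mul_lt_one hsub]
    exact hrate (Ξ + ε) (lt_add_of_pos_right Ξ hε) b hb
  · obtain ⟨C, hC, hrate⟩ := exists_forall_eventually_rpow_mul_le_of_one_le_mul h ht hc hcμ hδ hD
      hmono hγ hinc hu ⟨hμ.1, lt_two_of_one_le_mul hr hsuper⟩ hsuper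
    refine ⟨C, hC, fun ε hε b hb => ?_⟩
    have hfactor : 1 ≤ (noiseFactor r μ Ξ + ε) ^ μ :=
      Real.one_le_rpow (by linarith [one_le_noiseFactor hr hsuper hΞ]) hμ.1.le
    rw [rateExponent_of_one_le_mul hr hsuper]
    exact hrate b (hb.trans_le' (le_mul_of_one_le_right (by linarith) hfactor))

end Rate

theorem IsNoisyDescent.exists_forall_eventually_rpow_rateExponent_mul_le {E : Type*}
    [NormedAddCommGroup E] [InnerProductSpace ℝ E] [CompleteSpace E] {f : E → ℝ} {S Q : Set E}
    {L : ℝ≥0} {γ : ℕ → ℝ} {θ ζ : ℕ → E} {r δ μ M a Ξ : ℝ} (h : IsNoisyDescent f S L γ θ ζ)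
    (hS : IsCompact S) (hγ : Tendsto γ atTop atTop)
    (hinc : Tendsto (fun n => γ (n + 1) - γ n) atTop (𝓝 0)) (hr : 0 < r) (hΞ : 0 ≤ Ξ)
    (hζ : ∀ B, Ξ < B → WeightedNoiseLE γ ζ r B)
    (hfreq : ∀ ε > 0, ∃ᶠ n in atTop, f (θ n) - a ≤ ε) (hQ : ∀ᶠ n in atTop, θ n ∈ Q)
    (hδ : 0 < δ) (hμ : μ ∈ Set.Ioc 0 2) (hM : 0 < M)
    (hLoj : ∀ x ∈ Q, |f x - a| ≤ δ → |f x - a| ≤ M * ‖gradient f x‖ ^ μ) :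
    ∃ C, 1 ≤ C ∧ ∀ ε > 0, ∀ b > C * (noiseFactor r μ Ξ + ε) ^ μ,
      ∀ᶠ n in atTop, γ n ^ rateExponent r μ * (f (θ n) - a) ≤ b := by
  have hμ0 : 0 < μ := hμ.1
  set t : ℝ := 1 / (20 * (L + 1))
  have ht : 0 < t := by positivity
  have hL : L * t ≤ 1 / 20 := by
    rw [mul_one_div, div_le_div_iff₀ (by positivity) (by norm_num)]
    linarith
  have ht1 : t ≤ 1 := (div_le_one (by positivity)).2 (by linarith [L.coe_nonneg])
  set c := min (t / 8 / M ^ (2 / μ)) (μ / 2)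
  have hc : 0 < c := by positivity
  have hcM : c * M ^ (2 / μ) ≤ t / 8 := (le_div_iff₀ (by positivity)).1 (min_le_left _ _)
  have hcμ : c * (2 / μ) ≤ 1 := by
    rw [mul_div_assoc', div_le_one hμ0]
    linarith [min_le_right (t / 8 / M ^ (2 / μ)) (μ / 2)]
  exact _root_.exists_forall_eventually_rpow_rateExponent_mul_le
    (fun B hB => h.windowDecay (hζ B hB) hγ hr.le ht ht1 hL hc.le hμ0 hM.le hcM hQ hLoj)
    (h.windowUpperStable hS (hζ (Ξ + 1) (lt_add_one Ξ)) hγ hr ht1 hL)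
    ht hc hcμ hδ (by positivity) h.monotone hγ hinc hfreq hr hμ hΞ

/-! ### The neighbourhood of the accumulation points -/

/-- The closure of the union of the balls of radius `δ y / 2` around the accumulation points `y` of
the sequence `x`; this is `Q̂` in the paper. -/
def clusterHull {X : Type*} [PseudoMetricSpace X] (δ : X → ℝ) (x : ℕ → X) : Set X :=
  closure (⋃ y ∈ {y | MapClusterPt y atTop x}, Metric.closedBall y (δ y / 2))

lemma exists_mapClusterPt_of_comp {ι X Y : Type*} [TopologicalSpace X] [TopologicalSpace Y]
    [T2Space Y] {l : Filter ι} {x : ι → X} {S : Set X} {f : X → Y} {b : Y} (hS : IsCompact S)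
    (hx : ∀ᶠ i in l, x i ∈ S) (hf : Continuous f) (hb : MapClusterPt b l (f ∘ x)) :
    ∃ y, MapClusterPt y l x ∧ f y = b := by
  obtain ⟨U, hU, hUb⟩ := mapClusterPt_iff_ultrafilter.1 hb
  obtain ⟨y, -, hy⟩ := hS.ultrafilter_le_nhds' (U.map x) (hU hx)
  exact ⟨y, mapClusterPt_iff_ultrafilter.2 ⟨U, hU, hy⟩,
    tendsto_nhds_unique ((hf.tendsto y).comp hy) hUb⟩

section clusterHull

variable {X : Type*} {δ : X → ℝ} {x : ℕ → X} {S : Set X}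

lemma mem_clusterHull [PseudoMetricSpace X] {y : X} (hy : MapClusterPt y atTop x) (hδ : 0 ≤ δ y) :
    y ∈ clusterHull δ x :=
  subset_closure (Set.mem_biUnion hy (Metric.mem_closedBall_self (div_nonneg hδ zero_le_two)))

lemma isCompact_clusterHull [PseudoMetricSpace X] [ProperSpace X] (hδ : ∀ y, δ y ≤ 1)
    (hS : Bornology.IsBounded S) (hx : ∀ n, x n ∈ S) : IsCompact (clusterHull δ x) := by
  refine Metric.isCompact_of_isClosed_isBounded isClosed_closure
    ((hS.closure.cthickening (δ := 1)).subset (closure_minimal ?_ Metric.isClosed_cthickening))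
  refine Set.iUnion₂_subset fun y hy => ?_
  have hyS : y ∈ closure S := isClosed_closure.mem_of_mapClusterPt hy
    (.of_forall fun n => subset_closure (hx n))
  exact (Metric.closedBall_subset_cthickening hyS _).trans
    (Metric.cthickening_mono (by linarith [hδ y]) _)

lemma eventually_mem_clusterHull [PseudoMetricSpace X] (hδ : ∀ y, 0 < δ y) (hS : IsCompact S)
    (hx : ∀ n, x n ∈ S) : ∀ᶠ n in atTop, x n ∈ clusterHull δ x :=
  (hS.tendsto_nhdsSet_of_mapClusterPt (.of_forall hx) fun _ _ hy => hy).eventually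
    (mem_of_superset (bUnion_mem_nhdsSet fun y _ =>
      Metric.closedBall_mem_nhds y (half_pos (hδ y))) subset_closure)

lemma liminf_mem_image_clusterHull [PseudoMetricSpace X] {f : X → ℝ} (hδ : ∀ y, 0 ≤ δ y)
    (hS : IsCompact S) (hx : ∀ n, x n ∈ S) (hf : Continuous f) :
    liminf (fun n => f (x n)) atTop ∈ f '' clusterHull δ x := by
  obtain ⟨F, hF⟩ := hS.exists_bound_of_continuousOn hf.continuousOn
  have habove : IsBoundedUnder (· ≤ ·) atTop fun n => f (x n) :=
    isBoundedUnder_of ⟨F, fun n => (abs_le.1 (hF _ (hx n))).2⟩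
  have hbelow : IsBoundedUnder (· ≥ ·) atTop fun n => f (x n) :=
    isBoundedUnder_of ⟨-F, fun n => (abs_le.1 (hF _ (hx n))).1⟩
  obtain ⟨y, hy, hfy⟩ := exists_mapClusterPt_of_comp hS (.of_forall hx) hf
    (MapClusterPt.liminf habove.isCoboundedUnder_ge hbelow)
  exact ⟨y, mem_clusterHull hy (hδ y), hfy⟩

end clusterHull

lemma frequently_sub_liminf_le {u : ℕ → ℝ} (hu : IsBoundedUnder (· ≤ ·) atTop u) {ε : ℝ}
    (hε : 0 < ε) : ∃ᶠ n in atTop, u n - liminf u atTop ≤ ε :=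
  (frequently_lt_of_liminf_lt hu.isCoboundedUnder_ge (lt_add_of_pos_right _ hε)).mono
    fun _ hn => (sub_lt_iff_lt_add'.2 hn).le

/-! ### Bounded trajectories of stochastic gradient descent -/

section Trajectory

variable {E : Type*} [NormedAddCommGroup E] [InnerProductSpace ℝ E] [ProperSpace E] {f : E → ℝ}
  {γ : ℕ → ℝ} {θ ζ : ℕ → E} {R : ℝ}

lemma exists_isNoisyDescent (hfd : Differentiable ℝ f) (hlip : LocallyLipschitz (gradient f))
    (hmono : Monotone γ)
    (hstep : ∀ n, θ (n + 1) = θ n - (γ (n + 1) - γ n) • gradient f (θ n) - ζ n)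
    (hR : ∀ n, ‖θ n‖ ≤ R) : ∃ L, IsNoisyDescent f (Metric.closedBall 0 R) L γ θ ζ := by
  obtain ⟨L, hL⟩ := hlip.locallyLipschitzOn.exists_lipschitzOnWith_of_compact
    (isCompact_closedBall (0 : E) R)
  exact ⟨L, convex_closedBall 0 R, fun x _ => hfd x, hL, hmono,
    fun n => mem_closedBall_zero_iff.2 (hR n), hstep⟩

theorem exists_forall_eventually_rpow_rateExponent_mul_sub_liminf_le (hfd : Differentiable ℝ f)
    (hlip : LocallyLipschitz (gradient f)) (hmono : Monotone γ) (hγ : Tendsto γ atTop atTop)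
    (hinc : Tendsto (fun n => γ (n + 1) - γ n) atTop (𝓝 0))
    (hstep : ∀ n, θ (n + 1) = θ n - (γ (n + 1) - γ n) • gradient f (θ n) - ζ n)
    (hR : ∀ n, ‖θ n‖ ≤ R) {r : ℝ} (hr : 0 < r)
    (hnoise : IsBoundedUnder (· ≤ ·) atTop (windowNoise γ fun i => γ i ^ r • ζ i))
    {δQ μQ MQ : Set E → ℝ → ℝ}
    (hLoj : ∀ Q : Set E, IsCompact Q → ∀ b ∈ f '' Q,
      0 < δQ Q b ∧ μQ Q b ∈ Set.Ioc 0 2 ∧ 0 < MQ Q b ∧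
      ∀ x ∈ Q, |f x - b| ≤ δQ Q b → |f x - b| ≤ MQ Q b * ‖gradient f x‖ ^ μQ Q b)
    {δl : E → ℝ} (hδl : ∀ x, δl x ∈ Set.Ioc 0 1) :
    let fhat := liminf (fun n => f (θ n)) atTop
    let μhat := μQ (clusterHull δl θ) fhat
    let Xi := limsup (windowNoise γ fun i => γ i ^ r • ζ i) atTop
    ∃ C, 1 ≤ C ∧ ∀ ε > 0, ∀ c > C * (noiseFactor r μhat Xi + ε) ^ μhat,
      ∀ᶠ n in atTop, γ n ^ rateExponent r μhat * (f (θ n) - fhat) ≤ c := by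
  obtain ⟨L, hdescent⟩ := exists_isNoisyDescent hfd hlip hmono hstep hR
  have hball := isCompact_closedBall (0 : E) R
  obtain ⟨F, hF⟩ := hball.exists_bound_of_continuousOn hfd.continuous.continuousOn
  have habove : IsBoundedUnder (· ≤ ·) atTop fun n => f (θ n) :=
    isBoundedUnder_of ⟨F, fun n => (abs_le.1 (hF _ (hdescent.mem n))).2⟩
  have hcompact : IsCompact (clusterHull δl θ) :=
    isCompact_clusterHull (fun x => (hδl x).2) hball.isBounded hdescent.mem
  obtain ⟨hδ, hμ, hM, hineq⟩ := hLoj _ hcompact _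
    (liminf_mem_image_clusterHull (fun x => (hδl x).1.le) hball hdescent.mem hfd.continuous)
  exact hdescent.exists_forall_eventually_rpow_rateExponent_mul_le hball hγ hinc hr
    (limsup_windowNoise_nonneg hnoise) (fun B hB => weightedNoiseLE_of_limsup_lt hγ hnoise hB)
    (fun ε hε => frequently_sub_liminf_le habove hε)
    (eventually_mem_clusterHull (fun x => (hδl x).1) hball hdescent.mem) hδ hμ hM hineq

end Trajectory

theorem stochastic_gradient_limsup_bound_general {E : Type*} [NormedAddCommGroup E]
    [InnerProductSpace ℝ E] [ProperSpace E] {Ω : Type*} [MeasurableSpace Ω] (P : Measure Ω)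
    {f : E → ℝ} (hfd : Differentiable ℝ f) (hlip : LocallyLipschitz (gradient f))
    {α : ℕ → ℝ} (hα : ∀ n, 0 ≤ α n) {θ ξ : ℕ → Ω → E}
    (hrec : ∀ n ω, θ (n + 1) ω = θ n ω - α n • (gradient f (θ n ω) + ξ n ω))
    (hα0 : Tendsto α atTop (𝓝 0)) {γ : ℕ → ℝ} (hγ : ∀ n, γ n = ∑ i ∈ Finset.range n, α i)
    (hαdiv : Tendsto γ atTop atTop) {r : ℝ} (hr : 0 < r)
    (hnoise : ∀ᵐ ω ∂P, (∃ R, ∀ n, ‖θ n ω‖ ≤ R) →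
      IsBoundedUnder (· ≤ ·) atTop (windowNoise γ fun i => (α i * γ i ^ r) • ξ i ω))
    {δQ μQ MQ : Set E → ℝ → ℝ}
    (hLoj : ∀ Q : Set E, IsCompact Q → ∀ b ∈ f '' Q,
      0 < δQ Q b ∧ μQ Q b ∈ Set.Ioc 0 2 ∧ 0 < MQ Q b ∧
      ∀ x ∈ Q, |f x - b| ≤ δQ Q b → |f x - b| ≤ MQ Q b * ‖gradient f x‖ ^ μQ Q b)
    {δl : E → ℝ} (hδl : ∀ x, δl x ∈ Set.Ioc 0 1) :
    ∃ C₇ : Ω → ℝ, (∀ ω, 1 ≤ C₇ ω) ∧ ∀ᵐ ω ∂P, (∃ R, ∀ n, ‖θ n ω‖ ≤ R) →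
      let fhat := liminf (fun n => f (θ n ω)) atTop
      let μhat := μQ (clusterHull δl fun n => θ n ω) fhat
      let Xi := limsup (windowNoise γ fun i => (α i * γ i ^ r) • ξ i ω) atTop
      ∀ ε > 0, ∀ c > C₇ ω * (noiseFactor r μhat Xi + ε) ^ μhat,
        ∀ᶠ n in atTop, γ n ^ rateExponent r μhat * (f (θ n ω) - fhat) ≤ c := by
  have hinc : ∀ n, γ (n + 1) - γ n = α n := fun n => by
    rw [hγ, hγ, Finset.sum_range_succ, add_sub_cancel_left]
  have hmono : Monotone γ := monotone_nat_of_le_succ fun n => sub_nonneg.1 ((hα n).trans_eq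
    (hinc n).symm)
  have hweight : ∀ ω, (fun i => (α i * γ i ^ r) • ξ i ω) = fun i => γ i ^ r • α i • ξ i ω :=
    fun ω => funext fun i => by rw [smul_smul, mul_comm]
  simp only [hweight] at hnoise ⊢
  have pathwise : ∀ ω, ∃ C, 1 ≤ C ∧ ((∃ R, ∀ n, ‖θ n ω‖ ≤ R) →
      IsBoundedUnder (· ≤ ·) atTop (windowNoise γ fun i => γ i ^ r • α i • ξ i ω) →
      let fhat := liminf (fun n => f (θ n ω)) atTop
      let μhat := μQ (clusterHull δl fun n => θ n ω) fhat
      let Xi := limsup (windowNoise γ fun i => γ i ^ r • α i • ξ i ω) atTop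
      ∀ ε > 0, ∀ c > C * (noiseFactor r μhat Xi + ε) ^ μhat,
        ∀ᶠ n in atTop, γ n ^ rateExponent r μhat * (f (θ n ω) - fhat) ≤ c) := by
    intro ω
    by_cases hω : (∃ R, ∀ n, ‖θ n ω‖ ≤ R) ∧
      IsBoundedUnder (· ≤ ·) atTop (windowNoise γ fun i => γ i ^ r • α i • ξ i ω)
    · obtain ⟨⟨R, hR⟩, hbdd⟩ := hω
      obtain ⟨C, hC, hrate⟩ := exists_forall_eventually_rpow_rateExponent_mul_sub_liminf_le hfd hlip
        hmono hαdiv (by simpa only [hinc] using hα0)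
        (fun n => by rw [hrec, hinc, smul_add, sub_add_eq_sub_sub]) hR hr hbdd hLoj hδl
      exact ⟨C, hC, fun _ _ => hrate⟩
    · exact ⟨1, le_rfl, fun hR hbdd => absurd ⟨hR, hbdd⟩ hω⟩
  choose C₇ hC₇ hrate using pathwise
  refine ⟨C₇, hC₇, ?_⟩
  filter_upwards [hnoise] with ω hω hR
  exact hrate ω hR (hω hR)

/-- Lemma 1.7 of the paper: under Assumptions 1.1, 1.2, 1.3
there is a random variable `Ĉ₇ ∈ [1,∞)` such that, almost surely on `Λ`, for
every `ε > 0`: `limsup_n γ_n^p̂ u(θ_n) ≤ Ĉ₇ (φ_ε(ξ))^μ̂`.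
(`limsup u ≤ c` is expressed as: for every `c' > c`, eventually `u n ≤ c'`.) -/
theorem stochastic_gradient_limsup_bound
    {d : ℕ} (hd : 1 ≤ d)
    {Ω : Type} [MeasurableSpace Ω] (P : Measure Ω) [IsProbabilityMeasure P]
    (f : EuclideanSpace ℝ (Fin d) → ℝ)
    (hfd : Differentiable ℝ f)
    (hlip : LocallyLipschitz (fun x => gradient f x))
    (α : ℕ → ℝ) (hαpos : ∀ n, 0 < α n)
    (θ ξ : ℕ → Ω → EuclideanSpace ℝ (Fin d))
    (hrec : ∀ n ω, θ (n + 1) ω = θ n ω - α n • (gradient f (θ n ω) + ξ n ω))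
    -- Assumption 1.1
    (hα0 : Tendsto α atTop (nhds 0))
    (γ : ℕ → ℝ) (hγ : ∀ n, γ n = ∑ i ∈ Finset.range n, α i)
    (hαdiv : Tendsto γ atTop atTop)
    -- the interpolation index `a(n,t)`
    (a : ℕ → ℝ → ℕ)
    (ha : ∀ n t, 0 < t → a n t = sSup {k | n ≤ k ∧ γ k - γ n ≤ t})
    -- the event Λ
    (Λ : Set Ω) (hΛ : Λ = {ω | ∃ C, ∀ n, ‖θ n ω‖ ≤ C})
    -- Assumption 1.2
    (r : ℝ) (hr : 1 < r)
    (noise : ℕ → Ω → ℝ)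
    (hnoise : ∀ n ω, noise n ω =
      ⨆ k ∈ Set.Ico n (a n 1), ‖∑ i ∈ Finset.Icc n k, (α i * γ i ^ r) • ξ i ω‖)
    (hA12 : ∀ᵐ ω ∂P, ω ∈ Λ → IsBoundedUnder (· ≤ ·) atTop (fun n => noise n ω))
    (Xi : Ω → ℝ) (hXi : ∀ ω, Xi ω = Filter.limsup (fun n => noise n ω) atTop)
    -- Assumption 1.3 (Łojasiewicz-type gradient inequality, with a choice
    -- `δ_{Q,a}, μ_{Q,a}, M_{Q,a}` of the Łojasiewicz data for each compact `Q`
    -- and each value `a ∈ f(Q)`)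
    (δQ μQ MQ : Set (EuclideanSpace ℝ (Fin d)) → ℝ → ℝ)
    (hLoj : ∀ Q : Set (EuclideanSpace ℝ (Fin d)), IsCompact Q → ∀ b ∈ f '' Q,
      δQ Q b ∈ Set.Ioc (0 : ℝ) 1 ∧ μQ Q b ∈ Set.Ioc (1 : ℝ) 2 ∧ 1 ≤ MQ Q b ∧
      ∀ x ∈ Q, |f x - b| ≤ δQ Q b → |f x - b| ≤ MQ Q b * ‖gradient f x‖ ^ μQ Q b)
    -- the local Łojasiewicz data `δ_θ, μ_θ, M_θ` provided by Assumption 1.3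
    (δl μl Ml : EuclideanSpace ℝ (Fin d) → ℝ)
    (hδl : ∀ x, δl x ∈ Set.Ioc (0 : ℝ) 1)
    (hμl : ∀ x, μl x ∈ Set.Ioc (1 : ℝ) 2)
    (hMl : ∀ x, 1 ≤ Ml x)
    (hLocal : ∀ x y, ‖y - x‖ ≤ δl x → |f y - f x| ≤ Ml x * ‖gradient f y‖ ^ μl x)
    -- `f̂ = liminf_n f(θ_n)`
    (fhat : Ω → ℝ)
    (hfhat : ∀ ω, fhat ω = Filter.liminf (fun n => f (θ n ω)) atTop)
    -- `Â` = set of accumulation points of `{θ_n}`, and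
    -- `Q̂ = cl(⋃_{θ ∈ Â} {θ' : ‖θ' − θ‖ ≤ δ_θ/2})`
    (Ahat : Ω → Set (EuclideanSpace ℝ (Fin d)))
    (hAhat : ∀ ω, Ahat ω = {x | MapClusterPt x atTop (fun n => θ n ω)})
    (Qhat : Ω → Set (EuclideanSpace ℝ (Fin d)))
    (hQhat : ∀ ω, Qhat ω = closure (⋃ x ∈ Ahat ω, Metric.closedBall x (δl x / 2)))
    -- `μ̂ = μ_{Q̂,f̂}`, `r̂ = 1/(2−μ̂)` (`= ∞` if `μ̂ = 2`), `p̂ = μ̂ min{r,r̂}`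
    (μhat : Ω → ℝ) (hμhat : ∀ ω, μhat ω = μQ (Qhat ω) (fhat ω))
    (phat : Ω → ℝ)
    (hphat : ∀ ω, phat ω =
      μhat ω * (if μhat ω < 2 then min r (1 / (2 - μhat ω)) else r))
    -- `φ_ε(ξ) = φ(ξ) + ε` where `φ(ξ) = ξ` if `r < r̂`, `1 + ξ` if `r = r̂`,
    -- and `1` if `r > r̂`
    (φe : Ω → ℝ → ℝ)
    (hφe : ∀ ω ε, φe ω ε =
      (if μhat ω = 2 ∨ r < 1 / (2 - μhat ω) then Xi ω
        else if r = 1 / (2 - μhat ω) then 1 + Xi ω else 1) + ε) :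
    ∃ C₇ : Ω → ℝ, (∀ ω, 1 ≤ C₇ ω) ∧
      ∀ᵐ ω ∂P, ω ∈ Λ → ∀ ε : ℝ, 0 < ε →
        ∀ c : ℝ, C₇ ω * φe ω ε ^ μhat ω < c →
          ∀ᶠ n in atTop, γ n ^ phat ω * (f (θ n ω) - fhat ω) ≤ c := by
  simp only [hφe, hphat, hμhat, hQhat, hAhat, hfhat, hXi, hnoise, ha _ _ one_pos, hΛ] at hA12 ⊢
  exact stochastic_gradient_limsup_bound_general P hfd hlip (fun n => (hαpos n).le) hrec hα0 hγ
    hαdiv (one_pos.trans hr) hA12 (fun Q hQ b hb =>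
      let ⟨hδ, hμ, hM, hineq⟩ := hLoj Q hQ b hb
      ⟨hδ.1, ⟨one_pos.trans hμ.1, hμ.2⟩, one_pos.trans_le hM, hineq⟩) hδl
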